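/- For every sufficiently large n, every n-vertex W₅-free simple graph attaining the maximum spectral radius among all n-vertex W₅-free graphs also attains the maximum number of edges among all n-vertex W₅-free graphs; that is, SPEX(n, W₅) ⊆ EX(n, W₅). -/

import Mathlib

/-- The wheel graph on `t` vertices: vertex `0` joined to every vertex of the
cycle `1, 2, …, t-1` (with `t-1` adjacent to `1`). -/
def wheelGraph (t : ℕ) : SimpleGraph (Fin t) where
  Adj a b := a ≠ b ∧ (a.val = 0 ∨ b.val = 0 ∨ a.val + 1 = b.val ∨ b.val + 1 = a.val ∨
      (a.val = 1 ∧ b.val = t - 1) ∨ (b.val = 1 ∧ a.val = t - 1))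
  symm := by
    constructor
    intro a b h
    exact ⟨h.1.symm, by tauto⟩
  loopless := by
    constructor
    intro a h
    exact h.1 rfl

/-- `G` contains a copy of `F`, i.e. a subgraph isomorphic to `F`. -/
def ContainsCopy {α β : Type*} (F : SimpleGraph α) (G : SimpleGraph β) : Prop :=
  ∃ f : α ↪ β, ∀ a b, F.Adj a b → G.Adj (f a) (f b)

/-- `G` is `W_t`-free: it contains no subgraph isomorphic to the wheel on `t` vertices. -/
def WheelFree (t : ℕ) {n : ℕ} (G : SimpleGraph (Fin n)) : Prop :=
  ¬ ContainsCopy (wheelGraph t) G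

/-- The spectral radius of `G`: the largest eigenvalue of its adjacency matrix. -/
noncomputable def lam1 {n : ℕ} (G : SimpleGraph (Fin n)) : ℝ := by
  classical
  exact sSup {μ : ℝ | Module.End.HasEigenvalue (Matrix.toLin' (G.adjMatrix ℝ)) μ}

/-- The number of edges of a graph on a finite vertex type. -/
noncomputable def edgeCount {V : Type*} [Fintype V] (G : SimpleGraph V) : ℕ := by
  classical
  exact G.edgeFinset.card

/-- The degree of a vertex. -/
noncomputable def deg {n : ℕ} (G : SimpleGraph (Fin n)) (v : Fin n) : ℕ := by
  classical
  exact G.degree v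

/-- The number of neighbours of `v` inside the set `A`. -/
noncomputable def degIn {n : ℕ} (G : SimpleGraph (Fin n)) (A : Finset (Fin n)) (v : Fin n) : ℕ := by
  classical
  exact (A.filter fun u => G.Adj v u).card

/-- The number of edges of `G` with one endpoint in `S` and the other outside `S`. -/
noncomputable def cutCount {n : ℕ} (G : SimpleGraph (Fin n)) (S : Finset (Fin n)) : ℕ := by
  classical
  exact ((Finset.univ : Finset (Fin n × Fin n)).filter
    fun p => G.Adj p.1 p.2 ∧ p.1 ∈ S ∧ p.2 ∉ S).card

/-- `(S, T)` is a maximum cut of `G`. -/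
def IsMaxCut {n : ℕ} (G : SimpleGraph (Fin n)) (S T : Finset (Fin n)) : Prop :=
  T = Sᶜ ∧ ∀ S' : Finset (Fin n), cutCount G S' ≤ cutCount G S

/-- `G` attains the maximum spectral radius among all `n`-vertex `W_t`-free graphs. -/
def IsSpexWheel (t : ℕ) {n : ℕ} (G : SimpleGraph (Fin n)) : Prop :=
  WheelFree t G ∧ ∀ H : SimpleGraph (Fin n), WheelFree t H → lam1 H ≤ lam1 G

/-- `G` attains the maximum number of edges among all `n`-vertex `W_t`-free graphs. -/
def IsExWheel (t : ℕ) {n : ℕ} (G : SimpleGraph (Fin n)) : Prop :=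
  WheelFree t G ∧ ∀ H : SimpleGraph (Fin n), WheelFree t H → edgeCount H ≤ edgeCount G

/-!
A copy of `W₅` is a 4-cycle together with a vertex adjacent to all of it. Hence a graph is
`W₅`-free as soon as its vertices split into two parts each inducing a matching, and a maximal such
graph with parts of sizes `a` and `b` has `ab + ⌊a/2⌋ + ⌊b/2⌋` edges.

Let `G` be a spectral extremal graph on `n` vertices, `λ` its spectral radius and `x` a Perron
vector, with maximal entry `x z = 1`. Comparison with a maximal graph whose two parts have sizes
`⌊n/2⌋` and `⌈n/2⌉` gives `n ≤ 2λ`. Every neighbourhood is `C₄`-free and so spans only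
`O(n ^ (3/2))` edges; as `λ²` is at most the sum of the degrees over `N(z)`, almost all pairs
between `N(z)` and its complement are adjacent, and both sets have about `n / 2` vertices.
Trimming `N(z)` to the vertices with few non-neighbours on the other side leaves a set `S` which
induces a matching. Redirecting all edges of a vertex `v` to `S` keeps the graph `W₅`-free, so
extremality bounds `λ * x v` below by the weight of `S`, which is nearly `λ`. Thus `x` is positive
and every degree is nearly at least `n / 2`, which forces each vertex into one of two parts `A`,
`Aᶜ` inducing matchings; positivity of `x` makes `G` edge-maximal with this property.

Summing the eigenvalue equation over the parts gives `(λ - 1)² ≤ ab` for `a = |A|`, `b = |Aᶜ|`,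
strictly if `a` is odd, since then some vertex of `A` is unmatched. Any `W₅`-free graph `H` has
`2 e(H) ≤ λ n`, so by AM-GM `8 e(H) ≤ 4n + 4ab + n²`. For the comparison graph above this forces
`|a - b| ≤ 2`, and then, by a parity check, `e(H) ≤ ab + ⌊a/2⌋ + ⌊b/2⌋ = e(G)` for every `H`.
-/

open Finset Matrix

section Spectral

variable {ι : Type*} [Fintype ι] [DecidableEq ι] {A : Matrix ι ι ℝ}

/-- The largest eigenvalue of a real symmetric matrix, encoded as the supremum of the spectrum. -/
noncomputable def maxEigenvalue (A : Matrix ι ι ℝ) : ℝ :=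
  sSup (spectrum ℝ A)

theorem isGreatest_maxEigenvalue [Nonempty ι] (hA : A.IsHermitian) :
    IsGreatest (spectrum ℝ A) (maxEigenvalue A) :=
  finite_real_spectrum.isCompact.isGreatest_sSup
    ⟨_, hA.eigenvalues_mem_spectrum_real (Classical.arbitrary ι)⟩

theorem posSemidef_maxEigenvalue_smul_one_sub [Nonempty ι] (hA : A.IsHermitian) :
    (maxEigenvalue A • (1 : Matrix ι ι ℝ) - A).PosSemidef := by
  refine posSemidef_iff_isHermitian_and_spectrum_nonneg.2
    ⟨(isHermitian_one.smul (IsSelfAdjoint.all _)).sub hA, ?_⟩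
  rw [← Algebra.algebraMap_eq_smul_one, ← spectrum.singleton_sub_eq]
  rintro _ ⟨_, rfl, ν, hν, rfl⟩
  exact sub_nonneg.2 ((isGreatest_maxEigenvalue hA).2 hν)

theorem dotProduct_smul_one_sub_mulVec (μ : ℝ) (y : ι → ℝ) :
    star y ⬝ᵥ ((μ • (1 : Matrix ι ι ℝ) - A) *ᵥ y) = μ * (y ⬝ᵥ y) - y ⬝ᵥ (A *ᵥ y) := by
  simp only [star_trivial, sub_mulVec, smul_mulVec, one_mulVec, dotProduct_sub, dotProduct_smul,
    smul_eq_mul]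

theorem dotProduct_mulVec_le_maxEigenvalue_mul [Nonempty ι] (hA : A.IsHermitian) (y : ι → ℝ) :
    y ⬝ᵥ (A *ᵥ y) ≤ maxEigenvalue A * (y ⬝ᵥ y) := by
  have h := (posSemidef_maxEigenvalue_smul_one_sub hA).dotProduct_mulVec_nonneg y
  rwa [dotProduct_smul_one_sub_mulVec, sub_nonneg] at h

theorem mulVec_eq_maxEigenvalue_smul_of_le [Nonempty ι] (hA : A.IsHermitian) {y : ι → ℝ}
    (hy : maxEigenvalue A * (y ⬝ᵥ y) ≤ y ⬝ᵥ (A *ᵥ y)) : A *ᵥ y = maxEigenvalue A • y := by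
  have h := (posSemidef_maxEigenvalue_smul_one_sub hA).dotProduct_mulVec_zero_iff y
  rw [dotProduct_smul_one_sub_mulVec, sub_mulVec, smul_mulVec, one_mulVec, sub_eq_zero,
    sub_eq_zero] at h
  exact (h.1 (hy.antisymm (dotProduct_mulVec_le_maxEigenvalue_mul hA y))).symm

theorem exists_mulVec_eq_maxEigenvalue_smul [Nonempty ι] (hA : A.IsHermitian) :
    ∃ v : ι → ℝ, v ≠ 0 ∧ A *ᵥ v = maxEigenvalue A • v := by
  have h := (isGreatest_maxEigenvalue hA).1
  rw [← spectrum_toLin', ← Module.End.hasEigenvalue_iff_mem_spectrum] at h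
  obtain ⟨v, hv⟩ := h.exists_hasEigenvector
  exact ⟨v, hv.2, by simpa only [toLin'_apply] using hv.apply_eq_smul⟩

theorem exists_nonneg_mulVec_eq_maxEigenvalue_smul [Nonempty ι] (hA : A.IsHermitian)
    (hA0 : ∀ i j, 0 ≤ A i j) :
    ∃ w : ι → ℝ, 0 ≤ w ∧ w ≠ 0 ∧ A *ᵥ w = maxEigenvalue A • w := by
  obtain ⟨v, hv0, hv⟩ := exists_mulVec_eq_maxEigenvalue_smul hA
  refine ⟨|v|, abs_nonneg v, fun h => hv0 (funext fun i => abs_eq_zero.1 (congrFun h i)),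
    mulVec_eq_maxEigenvalue_smul_of_le hA ?_⟩
  have habs : |v| ⬝ᵥ |v| = v ⬝ᵥ v := by simp only [dotProduct, Pi.abs_apply, abs_mul_abs_self]
  calc maxEigenvalue A * (|v| ⬝ᵥ |v|) = v ⬝ᵥ (A *ᵥ v) := by
        rw [habs, hv, dotProduct_smul, smul_eq_mul]
    _ ≤ |v| ⬝ᵥ (A *ᵥ |v|) := by
        simp only [dotProduct, mulVec, mul_sum, Pi.abs_apply]
        refine sum_le_sum fun i _ => sum_le_sum fun j _ => ?_
        calc v i * (A i j * v j) ≤ |v i * (A i j * v j)| := le_abs_self _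
          _ = |v i| * (A i j * |v j|) := by rw [abs_mul, abs_mul, abs_of_nonneg (hA0 i j)]

theorem exists_perronVector [Nonempty ι] (hA : A.IsHermitian) (hA0 : ∀ i j, 0 ≤ A i j) :
    ∃ (x : ι → ℝ) (z : ι), 0 ≤ x ∧ x ≤ 1 ∧ x z = 1 ∧ A *ᵥ x = maxEigenvalue A • x := by
  obtain ⟨w, hw0, hw, hAw⟩ := exists_nonneg_mulVec_eq_maxEigenvalue_smul hA hA0
  obtain ⟨z, hz⟩ := Finite.exists_max w
  have hwz : 0 < w z := by
    obtain ⟨i, hi⟩ := Function.ne_iff.1 hw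
    exact ((hw0 i).lt_of_ne' hi).trans_le (hz i)
  refine ⟨(w z)⁻¹ • w, z, smul_nonneg (inv_nonneg.2 hwz.le) hw0, fun i => ?_,
    inv_mul_cancel₀ hwz.ne', ?_⟩
  · exact (inv_mul_le_one₀ hwz).2 (hz i)
  · rw [mulVec_smul, hAw, smul_comm]

end Spectral

section GraphSpectrum

variable {V : Type*} {G H : SimpleGraph V}

/-- The graph obtained from `G` by deleting all edges at `v` and joining `v` to the vertices of
`S` other than `v`. -/
def rewire (G : SimpleGraph V) (v : V) (S : Finset V) : SimpleGraph V where
  Adj a b := (a ≠ v ∧ b ≠ v ∧ G.Adj a b) ∨ (a = v ∧ b ≠ v ∧ b ∈ S) ∨ (b = v ∧ a ≠ v ∧ a ∈ S)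
  symm := ⟨fun a b h => by rw [G.adj_comm]; tauto⟩
  loopless := ⟨fun a h => by have := G.irrefl (v := a); tauto⟩

theorem rewire_adj_self_iff {v u : V} {S : Finset V} :
    (rewire G v S).Adj v u ↔ u ≠ v ∧ u ∈ S := by
  simp only [rewire]; tauto

theorem rewire_adj_iff_of_ne {v a b : V} {S : Finset V} (ha : a ≠ v) (hb : b ≠ v) :
    (rewire G v S).Adj a b ↔ G.Adj a b := by
  simp only [rewire]; tauto

theorem adjMatrix_apply_nonneg [DecidableRel G.Adj] (u v : V) : 0 ≤ G.adjMatrix ℝ u v := by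
  rw [SimpleGraph.adjMatrix_apply]; split_ifs <;> simp

variable [Fintype V] [DecidableRel G.Adj] [DecidableRel H.Adj] {x : V → ℝ} {l : ℝ}

theorem sum_neighborFinset_eq_mul (hx : G.adjMatrix ℝ *ᵥ x = l • x) (v : V) :
    ∑ u ∈ G.neighborFinset v, x u = l * x v := by
  rw [← SimpleGraph.adjMatrix_mulVec_apply, hx, Pi.smul_apply, smul_eq_mul]

variable [DecidableEq V]

theorem two_mul_card_edgeFinset_le_maxEigenvalue_mul_card [Nonempty V] :
    2 * (#G.edgeFinset : ℝ) ≤ maxEigenvalue (G.adjMatrix ℝ) * Fintype.card V := by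
  have h := dotProduct_mulVec_le_maxEigenvalue_mul (G.isHermitian_adjMatrix ℝ) 1
  rw [one_dotProduct_one] at h
  calc 2 * (#G.edgeFinset : ℝ) = Fintype.card G.Dart := by
        rw [G.dart_card_eq_twice_card_edges]; push_cast; rfl
    _ = 1 ⬝ᵥ (G.adjMatrix ℝ *ᵥ 1) := by
        rw [G.natCast_card_dart_eq_dotProduct, dotProduct_comm]
    _ ≤ _ := h

theorem lt_maxEigenvalue_adjMatrix_of_lt (hGH : G < H) (hx0 : ∀ v, 0 < x v)
    (hx : G.adjMatrix ℝ *ᵥ x = l • x) : l < maxEigenvalue (H.adjMatrix ℝ) := by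
  obtain ⟨u, v, hH, hG⟩ : ∃ u v, H.Adj u v ∧ ¬ G.Adj u v := by
    simpa [SimpleGraph.le_iff_adj] using hGH.not_ge
  have : Nonempty V := ⟨u⟩
  have hxx : 0 < x ⬝ᵥ x := sum_pos (fun i _ => mul_pos (hx0 i) (hx0 i)) univ_nonempty
  have hsub (i : V) : G.neighborFinset i ⊆ H.neighborFinset i := fun j hj => by
    simpa using hGH.le (by simpa using hj)
  have hle (i : V) : (G.adjMatrix ℝ *ᵥ x) i ≤ (H.adjMatrix ℝ *ᵥ x) i := by
    simp only [SimpleGraph.adjMatrix_mulVec_apply]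
    exact sum_le_sum_of_subset_of_nonneg (hsub i) fun j _ _ => (hx0 j).le
  have hlt : (G.adjMatrix ℝ *ᵥ x) u < (H.adjMatrix ℝ *ᵥ x) u := by
    simp only [SimpleGraph.adjMatrix_mulVec_apply]
    exact sum_lt_sum_of_subset (hsub u) (i := v) (by simpa) (by simpa)
      (hx0 v) fun j _ _ => (hx0 j).le
  refine lt_of_mul_lt_mul_right ?_ hxx.le
  calc l * (x ⬝ᵥ x) = x ⬝ᵥ (G.adjMatrix ℝ *ᵥ x) := by rw [hx, dotProduct_smul, smul_eq_mul]
    _ < x ⬝ᵥ (H.adjMatrix ℝ *ᵥ x) :=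
        sum_lt_sum (fun i _ => mul_le_mul_of_nonneg_left (hle i) (hx0 i).le)
          ⟨u, mem_univ u, mul_lt_mul_of_pos_left hlt (hx0 u)⟩
    _ ≤ _ := dotProduct_mulVec_le_maxEigenvalue_mul (H.isHermitian_adjMatrix ℝ) x

theorem dotProduct_adjMatrix_mulVec_eq_add_sum_erase (v : V) (y : V → ℝ) :
    y ⬝ᵥ (G.adjMatrix ℝ *ᵥ y) = 2 * (y v * ∑ u ∈ G.neighborFinset v, y u) +
      ∑ i ∈ univ.erase v, ∑ j ∈ univ.erase v, y i * (G.adjMatrix ℝ i j * y j) := by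
  have hsplit (i : V) : (G.adjMatrix ℝ *ᵥ y) i =
      G.adjMatrix ℝ i v * y v + ∑ j ∈ univ.erase v, G.adjMatrix ℝ i j * y j := by
    rw [mulVec, dotProduct, ← add_sum_erase _ _ (mem_univ v)]
  have hcol : ∑ i ∈ univ.erase v, y i * (G.adjMatrix ℝ i v * y v) =
      y v * ∑ u ∈ G.neighborFinset v, y u := by
    rw [← SimpleGraph.adjMatrix_mulVec_apply, hsplit, SimpleGraph.adjMatrix_apply,
      if_neg G.irrefl, zero_mul, zero_add, mul_sum]
    refine sum_congr rfl fun i _ => ?_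
    rw [G.isSymm_adjMatrix.apply]; ring
  rw [dotProduct, ← add_sum_erase _ _ (mem_univ v), SimpleGraph.adjMatrix_mulVec_apply]
  simp only [hsplit, mul_add (y _), sum_add_distrib, hcol]
  simp only [mul_sum (univ.erase v)]
  ring

theorem dotProduct_update_adjMatrix_rewire_mulVec (x : V → ℝ) (v : V) (S : Finset V) (c : ℝ)
    [DecidableRel (rewire G v S).Adj] :
    Function.update x v c ⬝ᵥ ((rewire G v S).adjMatrix ℝ *ᵥ Function.update x v c) =
      2 * (c * ∑ s ∈ S.erase v, x s) +
        ∑ i ∈ univ.erase v, ∑ j ∈ univ.erase v, x i * (G.adjMatrix ℝ i j * x j) := by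
  have hN : (rewire G v S).neighborFinset v = S.erase v := by
    ext u; simp only [SimpleGraph.mem_neighborFinset, rewire_adj_self_iff, mem_erase]
  rw [dotProduct_adjMatrix_mulVec_eq_add_sum_erase v, Function.update_self, hN]
  congr 1
  · congr 2
    exact sum_congr rfl fun u hu => Function.update_of_ne (ne_of_mem_erase hu) _ _
  · refine sum_congr rfl fun i hi => sum_congr rfl fun j hj => ?_
    have hi := ne_of_mem_erase hi
    have hj := ne_of_mem_erase hj
    simp only [Function.update_of_ne hi, Function.update_of_ne hj, SimpleGraph.adjMatrix_apply,
      rewire_adj_iff_of_ne hi hj]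

/-- Rayleigh's bound for the rewired graph, at the vector equal to `σ / l` at `v` and to `x`
elsewhere, where `σ` is the sum on the left. -/
theorem sum_erase_le_mul_of_maxEigenvalue_rewire_le (hl : 0 < l)
    (hx : G.adjMatrix ℝ *ᵥ x = l • x) {v : V} (hxv : 0 ≤ x v) {S : Finset V}
    [DecidableRel (rewire G v S).Adj] (h : maxEigenvalue ((rewire G v S).adjMatrix ℝ) ≤ l) :
    ∑ s ∈ S.erase v, x s ≤ l * x v := by
  have : Nonempty V := ⟨v⟩
  set σ := ∑ s ∈ S.erase v, x s with hσ
  have hdot (w : V → ℝ) : w ⬝ᵥ w = w v ^ 2 + ∑ i ∈ univ.erase v, w i * w i := by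
    rw [dotProduct, ← add_sum_erase _ _ (mem_univ v), sq]
  have hyy : Function.update x v (σ / l) ⬝ᵥ Function.update x v (σ / l) =
      (σ / l) ^ 2 + ∑ i ∈ univ.erase v, x i * x i := by
    rw [hdot, Function.update_self]
    exact congrArg _ (sum_congr rfl fun i hi => by
      rw [Function.update_of_ne (ne_of_mem_erase hi)])
  have hray := (dotProduct_mulVec_le_maxEigenvalue_mul ((rewire G v S).isHermitian_adjMatrix ℝ)
    (Function.update x v (σ / l))).trans
      (mul_le_mul_of_nonneg_right h (sum_nonneg fun i _ => mul_self_nonneg _))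
  have hxx : x ⬝ᵥ (G.adjMatrix ℝ *ᵥ x) = l * (x ⬝ᵥ x) := by rw [hx, dotProduct_smul, smul_eq_mul]
  rw [dotProduct_update_adjMatrix_rewire_mulVec, ← hσ, hyy] at hray
  rw [dotProduct_adjMatrix_mulVec_eq_add_sum_erase v, sum_neighborFinset_eq_mul hx, hdot] at hxx
  have hσl : l * (σ / l) = σ := mul_div_cancel₀ σ hl.ne'
  have hsq : (σ / l) ^ 2 ≤ x v ^ 2 := by
    refine le_of_mul_le_mul_left ?_ hl
    linear_combination hray - hxx + 2 * (σ / l) * hσl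
  calc σ = l * (σ / l) := hσl.symm
    _ ≤ l * x v := mul_le_mul_of_nonneg_left (abs_le_of_sq_le_sq' hsq hxv).2 hl.le

end GraphSpectrum

section WheelFree

variable {V : Type*} {G H : SimpleGraph V}

/-- No vertex is joined to all vertices of a 4-cycle `a b c d`: the elementary form of
`W₅`-freeness, on an arbitrary vertex type. -/
def LocallyC4Free (G : SimpleGraph V) : Prop :=
  ∀ ⦃h a b c d⦄, G.Adj h a → G.Adj h b → G.Adj h c → G.Adj h d →
    G.Adj a b → G.Adj b c → G.Adj c d → G.Adj d a → a ≠ c → b = d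

theorem not_containsCopy_wheelGraph_five_iff :
    ¬ ContainsCopy (wheelGraph 5) G ↔ LocallyC4Free G := by
  constructor
  · intro hG h a b c d ha hb hc hd hab hbc hcd hda hac
    by_contra hbd
    refine hG ⟨⟨![h, a, b, c, d], ?_⟩, ?_⟩
    · have := ha.ne; have := hb.ne; have := hc.ne; have := hd.ne
      have := hab.ne; have := hbc.ne; have := hcd.ne; have := hda.ne
      intro i j hij
      fin_cases i <;> fin_cases j <;> simp_all
    · intro i j hij
      fin_cases i <;> fin_cases j <;> simp [wheelGraph] at hij <;>
        first | assumption | (apply SimpleGraph.Adj.symm; assumption)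
  · rintro hG ⟨f, hf⟩
    have hspoke (i : Fin 5) (hi : i ≠ 0) : G.Adj (f 0) (f i) := hf _ _ ⟨hi.symm, .inl rfl⟩
    exact f.injective.ne (by decide : (2 : Fin 5) ≠ 4) <|
      hG (hspoke 1 (by decide)) (hspoke 2 (by decide)) (hspoke 3 (by decide))
        (hspoke 4 (by decide)) (hf 1 2 (by simp [wheelGraph])) (hf 2 3 (by simp [wheelGraph]))
        (hf 3 4 (by simp [wheelGraph])) (hf 4 1 (by simp [wheelGraph]))
        (f.injective.ne (by decide))

theorem wheelFree_five_iff {n : ℕ} {G : SimpleGraph (Fin n)} :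
    WheelFree 5 G ↔ LocallyC4Free G :=
  not_containsCopy_wheelGraph_five_iff

/-- The subgraph of `G` induced on `S` is a matching, possibly with isolated vertices. -/
def InducesMatching (G : SimpleGraph V) (S : Finset V) : Prop :=
  ∀ ⦃u a b⦄, u ∈ S → a ∈ S → b ∈ S → G.Adj u a → G.Adj u b → a = b

/-- Both parts of the vertex partition `(A, Aᶜ)` induce a matching. -/
def IsMatchedBipartition [Fintype V] [DecidableEq V] (G : SimpleGraph V) (A : Finset V) : Prop :=
  InducesMatching G A ∧ InducesMatching G Aᶜ

theorem IsMatchedBipartition.compl [Fintype V] [DecidableEq V] {A : Finset V}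
    (hA : IsMatchedBipartition G A) : IsMatchedBipartition G Aᶜ :=
  ⟨hA.2, (compl_compl A).symm ▸ hA.1⟩

/-- At most one rim vertex lies on the side of the hub, so the other side contains a path on three
vertices. -/
theorem IsMatchedBipartition.locallyC4Free [Fintype V] [DecidableEq V] {A : Finset V}
    (hA : IsMatchedBipartition G A) : LocallyC4Free G := by
  intro h a b c d ha hb hc hd hab hbc hcd hda hac
  wlog hh : h ∈ A generalizing A
  · exact this hA.compl (mem_compl.2 hh)
  have hub {p q : V} (hp : G.Adj h p) (hq : G.Adj h q) (hpq : p ≠ q) (hpA : p ∈ A) : q ∈ Aᶜ :=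
    mem_compl.2 fun hqA => hpq (hA.1 hh hpA hqA hp hq)
  by_cases haA : a ∈ A
  · exact hA.2 (hub ha hc hac haA) (hub ha hb hab.ne haA) (hub ha hd hda.ne' haA) hbc.symm hcd
  by_cases hcA : c ∈ A
  · exact hA.2 (mem_compl.2 haA) (hub hc hb hbc.ne' hcA) (hub hc hd hcd.ne hcA) hab hda.symm
  rw [← mem_compl] at haA hcA
  by_contra hbd
  by_cases hbA : b ∈ A
  · exact hac (hA.2 (hub hb hd hbd hbA) haA hcA hda hcd.symm)
  · exact hac (hA.2 (mem_compl.2 hbA) haA hcA hab.symm hbc)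

/-- Every vertex of `W₅` has three neighbours forming a path, so none of them can be `v`. -/
theorem LocallyC4Free.of_adj_imp_adj_of_ne (hG : LocallyC4Free G) {v : V}
    (hv : ∀ ⦃p q r⦄, H.Adj v p → H.Adj v q → H.Adj v r → H.Adj q p → H.Adj q r → p = r)
    (hH : ∀ ⦃a b⦄, a ≠ v → b ≠ v → H.Adj a b → G.Adj a b) : LocallyC4Free H := by
  intro h a b c d ha hb hc hd hab hbc hcd hda hac
  obtain rfl | hhv := eq_or_ne h v
  · exact hv hb ha hd hab hda.symm
  obtain rfl | hav := eq_or_ne a v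
  · exact hv hab ha.symm hda.symm hb hd
  obtain rfl | hcv := eq_or_ne c v
  · exact hv hbc.symm hc.symm hcd hb hd
  obtain rfl | hbv := eq_or_ne b v
  · exact absurd (hv hab.symm hb.symm hbc ha hc) hac
  obtain rfl | hdv := eq_or_ne d v
  · exact absurd (hv hda hd.symm hcd.symm ha hc) hac
  exact hG (hH hhv hav ha) (hH hhv hbv hb) (hH hhv hcv hc) (hH hhv hdv hd) (hH hav hbv hab)
    (hH hbv hcv hbc) (hH hcv hdv hcd) (hH hdv hav hda) hac

theorem LocallyC4Free.rewire (hG : LocallyC4Free G) (v : V) {S : Finset V}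
    (hS : InducesMatching G S) : LocallyC4Free (rewire G v S) := by
  refine hG.of_adj_imp_adj_of_ne (v := v) (fun p q r hp hq hr hqp hqr => ?_)
    fun a b ha hb => (rewire_adj_iff_of_ne ha hb).1
  rw [rewire_adj_self_iff] at hp hq hr
  exact hS hq.2 hp.2 hr.2 ((rewire_adj_iff_of_ne hq.1 hp.1).1 hqp)
    ((rewire_adj_iff_of_ne hq.1 hr.1).1 hqr)

/-- For a path `b a c`, a vertex of `T` adjacent to all of `a, b, c` closes a 4-cycle in the
neighbourhood of `a`. -/
theorem LocallyC4Free.card_le_of_path [DecidableEq V] [Fintype V] [DecidableRel G.Adj]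
    (hG : LocallyC4Free G) {a b c : V} (hbc : b ≠ c) (hab : G.Adj a b) (hac : G.Adj a c)
    (T : Finset V) :
    #T ≤ #(T \ G.neighborFinset a) + #(T \ G.neighborFinset b) + #(T \ G.neighborFinset c) + 1 := by
  set N := T.filter fun u => G.Adj a u ∧ G.Adj b u ∧ G.Adj c u
  have hN : #N ≤ 1 := card_le_one.2 fun u hu w hw => by
    simp only [N, mem_filter] at hu hw
    exact hG hab hu.2.1 hac hw.2.1 hu.2.2.1 hu.2.2.2.symm hw.2.2.2 hw.2.2.1.symm hbc
  have hT : T ⊆ T \ G.neighborFinset a ∪ T \ G.neighborFinset b ∪ T \ G.neighborFinset c ∪ N := by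
    intro u hu
    simp only [N, mem_union, mem_sdiff, SimpleGraph.mem_neighborFinset, mem_filter, hu, true_and]
    tauto
  grw [hT, card_union_le, card_union_le, card_union_le, hN]

end WheelFree

section MatchedBipartition

variable {V : Type*} {G : SimpleGraph V} {S : Finset V}

theorem InducesMatching.sup_edge (hS : InducesMatching G S) {u v : V}
    (h : u ∈ S → v ∈ S → ∀ w ∈ S, ¬ G.Adj u w ∧ ¬ G.Adj v w) :
    InducesMatching (G ⊔ SimpleGraph.edge u v) S := by
  intro p a b hp ha hb hpa hpb
  simp only [SimpleGraph.sup_adj, SimpleGraph.edge_adj] at hpa hpb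
  have := hS hp ha hb
  grind

variable [Fintype V] [DecidableEq V] {A : Finset V}

theorem exists_maximal_isMatchedBipartition (A : Finset V) :
    ∃ G : SimpleGraph V, Maximal (fun H => IsMatchedBipartition H A) G :=
  (Set.toFinite {H : SimpleGraph V | IsMatchedBipartition H A}).exists_maximal
    ⟨⊥, fun _ _ _ _ _ _ h => h.elim, fun _ _ _ _ _ _ h => h.elim⟩

theorem adj_of_maximal_of_sup_edge (hG : Maximal (fun H => IsMatchedBipartition H A) G) {u v : V}
    (huv : u ≠ v) (h : IsMatchedBipartition (G ⊔ SimpleGraph.edge u v) A) : G.Adj u v :=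
  ((SimpleGraph.edge_le_iff G).1 (le_sup_right.trans (hG.2 h le_sup_left))).resolve_left huv

theorem adj_of_maximal_isMatchedBipartition (hG : Maximal (fun H => IsMatchedBipartition H A) G)
    {u v : V} (hu : u ∈ A) (hv : v ∉ A) : G.Adj u v :=
  adj_of_maximal_of_sup_edge hG (fun h => hv (h ▸ hu))
    ⟨hG.1.1.sup_edge fun _ h => absurd h hv, hG.1.2.sup_edge fun h => absurd hu (mem_compl.1 h)⟩

theorem maximal_isMatchedBipartition_compl (hG : Maximal (fun H => IsMatchedBipartition H A) G) :
    Maximal (fun H => IsMatchedBipartition H Aᶜ) G :=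
  ⟨hG.1.compl, fun _ hH => hG.2 (compl_compl A ▸ IsMatchedBipartition.compl hH)⟩

theorem eq_of_maximal_of_forall_not_adj (hG : Maximal (fun H => IsMatchedBipartition H A) G)
    {u v : V} (hu : u ∈ A) (hv : v ∈ A) (hu' : ∀ w ∈ A, ¬ G.Adj u w) (hv' : ∀ w ∈ A, ¬ G.Adj v w) :
    u = v := by
  by_contra huv
  refine hu' v hv (adj_of_maximal_of_sup_edge hG huv ⟨hG.1.1.sup_edge fun _ _ w hw => ?_, ?_⟩)
  · exact ⟨hu' w hw, hv' w hw⟩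
  · exact hG.1.2.sup_edge fun h => absurd hu (mem_compl.1 h)

variable [DecidableRel G.Adj]

theorem InducesMatching.card_inter_neighborFinset_le_one (hS : InducesMatching G S) {v : V}
    (hv : v ∈ S) : #(S ∩ G.neighborFinset v) ≤ 1 :=
  card_le_one.2 fun a ha b hb => by
    simp only [mem_inter, SimpleGraph.mem_neighborFinset] at ha hb
    exact hS hv ha.1 hb.1 ha.2 hb.2

theorem even_sum_card_inter_neighborFinset (G : SimpleGraph V) [DecidableRel G.Adj]
    (S : Finset V) : Even (∑ v ∈ S, #(S ∩ G.neighborFinset v)) := by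
  have h (v : S) : #(S ∩ G.neighborFinset v) = (G.induce (S : Set V)).degree v := by
    have hmap := congrArg card (SimpleGraph.map_neighborFinset_induce (G := G) (s := S) v)
    rw [card_map, toFinset_coe, inter_comm] at hmap
    rw [← SimpleGraph.card_neighborFinset_eq_degree, ← hmap]
    congr!
  rw [← sum_coe_sort, sum_congr rfl fun v _ => h v]
  exact ⟨_, (SimpleGraph.sum_degrees_eq_twice_card_edges _).trans (two_mul _)⟩

theorem InducesMatching.exists_inter_neighborFinset_eq_empty (hS : InducesMatching G S)
    (hodd : Odd #S) : ∃ v ∈ S, S ∩ G.neighborFinset v = ∅ := by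
  by_contra! h
  have hone (v : V) (hv : v ∈ S) : #(S ∩ G.neighborFinset v) = 1 :=
    (hS.card_inter_neighborFinset_le_one hv).antisymm (card_pos.2 (h v hv))
  have heven := even_sum_card_inter_neighborFinset G S
  rw [sum_congr rfl hone, sum_const, smul_eq_mul, mul_one] at heven
  exact Nat.not_even_iff_odd.2 hodd heven

theorem sum_card_inter_neighborFinset_of_maximal
    (hG : Maximal (fun H => IsMatchedBipartition H A) G) :
    ∑ v ∈ A, #(A ∩ G.neighborFinset v) = 2 * (#A / 2) := by
  obtain ⟨r, hr⟩ := even_sum_card_inter_neighborFinset G A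
  have hiso : #{v ∈ A | A ∩ G.neighborFinset v = ∅} ≤ 1 := card_le_one.2 fun u hu v hv => by
    simp only [mem_filter, Finset.ext_iff, mem_inter, SimpleGraph.mem_neighborFinset,
      notMem_empty, iff_false, not_and] at hu hv
    exact eq_of_maximal_of_forall_not_adj hG hu.1 hv.1 hu.2 hv.2
  have hsum : ∑ v ∈ A, #(A ∩ G.neighborFinset v) + #{v ∈ A | A ∩ G.neighborFinset v = ∅} = #A := by
    rw [card_filter, ← sum_add_distrib, card_eq_sum_ones A]
    refine sum_congr rfl fun v hv => ?_
    have := hG.1.1.card_inter_neighborFinset_le_one hv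
    split_ifs with h0
    · rw [h0, card_empty]
    · exact this.antisymm (card_pos.2 (nonempty_iff_ne_empty.2 h0))
  omega

theorem sum_degree_add_sum_card_sdiff (G : SimpleGraph V) [DecidableRel G.Adj] (A : Finset V) :
    ∑ u ∈ A, G.degree u + ∑ u ∈ A, #(Aᶜ \ G.neighborFinset u) =
      ∑ u ∈ A, #(A ∩ G.neighborFinset u) + #A * #Aᶜ := by
  rw [← smul_eq_mul #A, ← sum_const, ← sum_add_distrib, ← sum_add_distrib]
  refine sum_congr rfl fun u _ => ?_
  rw [← G.card_neighborFinset_eq_degree, ← card_inter_add_card_sdiff (G.neighborFinset u) A,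
    ← card_sdiff_add_card_inter Aᶜ (G.neighborFinset u), inter_comm A, inter_comm Aᶜ,
    sdiff_eq_inter_compl _ A]
  ring

theorem sum_degree_of_maximal (hG : Maximal (fun H => IsMatchedBipartition H A) G) :
    ∑ u ∈ A, G.degree u = 2 * (#A / 2) + #A * #Aᶜ := by
  have hmiss (u : V) (hu : u ∈ A) : #(Aᶜ \ G.neighborFinset u) = 0 :=
    card_eq_zero.2 <| sdiff_eq_empty_iff_subset.2 fun v hv => (G.mem_neighborFinset u v).2 <|
      adj_of_maximal_isMatchedBipartition hG hu (mem_compl.1 hv)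
  have h := sum_degree_add_sum_card_sdiff G A
  rwa [sum_card_inter_neighborFinset_of_maximal hG, sum_eq_zero hmiss] at h

/-- The number of edges of a maximal graph with a matched bipartition into parts of sizes `a` and
`b`: all edges between the parts, and in each part a matching missing at most one vertex. -/
def matchedEdges (a b : ℕ) : ℕ :=
  a * b + a / 2 + b / 2

theorem card_edgeFinset_of_maximal (hG : Maximal (fun H => IsMatchedBipartition H A) G) :
    #G.edgeFinset = matchedEdges #A #Aᶜ := by
  unfold matchedEdges
  have hdeg := G.sum_degrees_eq_twice_card_edges
  rw [← sum_add_sum_compl A, sum_degree_of_maximal hG,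
    sum_degree_of_maximal (maximal_isMatchedBipartition_compl hG), compl_compl] at hdeg
  linarith

variable {x : V → ℝ} {l : ℝ}

theorem mul_sum_eq_sum_card_inter_mul (hx : G.adjMatrix ℝ *ᵥ x = l • x) (A : Finset V) :
    l * ∑ v ∈ A, x v = ∑ u, #(A ∩ G.neighborFinset u) * x u := by
  calc l * ∑ v ∈ A, x v = ∑ v ∈ A, ∑ u ∈ G.neighborFinset v, x u := by
        rw [mul_sum]; exact sum_congr rfl fun v _ => (sum_neighborFinset_eq_mul hx v).symm
    _ = ∑ u, ∑ _v ∈ A ∩ G.neighborFinset u, x u :=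
        sum_comm' fun v u => by simp [G.adj_comm]
    _ = _ := by simp only [sum_const, nsmul_eq_mul]

theorem mul_sum_le_sum_card_inter_mul_add (hx : G.adjMatrix ℝ *ᵥ x = l • x) (hx0 : 0 ≤ x)
    (A : Finset V) : l * ∑ v ∈ A, x v ≤
      ∑ u ∈ A, #(A ∩ G.neighborFinset u) * x u + #A * ∑ u ∈ Aᶜ, x u := by
  rw [mul_sum_eq_sum_card_inter_mul hx, ← sum_add_sum_compl A, mul_sum Aᶜ]
  gcongr with u
  · exact hx0 u
  · exact inter_subset_left

theorem InducesMatching.sub_one_mul_sum_le (hA : InducesMatching G A)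
    (hx : G.adjMatrix ℝ *ᵥ x = l • x) (hx0 : 0 ≤ x) :
    (l - 1) * ∑ v ∈ A, x v ≤ #A * ∑ v ∈ Aᶜ, x v := by
  have hin : ∑ u ∈ A, #(A ∩ G.neighborFinset u) * x u ≤ ∑ u ∈ A, x u :=
    sum_le_sum fun u hu => mul_le_of_le_one_left (hx0 u)
      (mod_cast hA.card_inter_neighborFinset_le_one hu)
  linarith [mul_sum_le_sum_card_inter_mul_add hx hx0 A]

theorem InducesMatching.sub_one_mul_sum_lt (hA : InducesMatching G A)
    (hx : G.adjMatrix ℝ *ᵥ x = l • x) (hx0 : ∀ v, 0 < x v) (hodd : Odd #A) :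
    (l - 1) * ∑ v ∈ A, x v < #A * ∑ v ∈ Aᶜ, x v := by
  obtain ⟨v, hv, hvA⟩ := hA.exists_inter_neighborFinset_eq_empty hodd
  have hin : ∑ u ∈ A, #(A ∩ G.neighborFinset u) * x u < ∑ u ∈ A, x u :=
    sum_lt_sum (fun u hu => mul_le_of_le_one_left (hx0 u).le
      (mod_cast hA.card_inter_neighborFinset_le_one hu)) ⟨v, hv, by simpa [hvA] using hx0 v⟩
  linarith [mul_sum_le_sum_card_inter_mul_add hx (fun u => (hx0 u).le) A]

/-- Multiply the bounds for the two sides of the bipartition. -/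
theorem IsMatchedBipartition.sub_one_sq_le [Nonempty V] (hA : IsMatchedBipartition G A)
    (hx : G.adjMatrix ℝ *ᵥ x = l • x) (hx0 : ∀ v, 0 < x v) (hl : 1 < l) :
    (l - 1) ^ 2 ≤ #A * #Aᶜ ∧ (Odd #A → (l - 1) ^ 2 < #A * #Aᶜ) := by
  have hle := hA.1.sub_one_mul_sum_le hx fun v => (hx0 v).le
  have hle' := hA.2.sub_one_mul_sum_le hx fun v => (hx0 v).le
  have hlt := hA.1.sub_one_mul_sum_lt hx hx0
  rw [compl_compl] at hle'
  have hpos : 0 < ∑ v ∈ A, x v + ∑ v ∈ Aᶜ, x v := by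
    rw [sum_add_sum_compl]
    exact sum_pos (fun v _ => hx0 v) univ_nonempty
  set s := ∑ v ∈ A, x v
  set t := ∑ v ∈ Aᶜ, x v
  have hs : 0 ≤ s := sum_nonneg fun v _ => (hx0 v).le
  have ht : 0 ≤ t := sum_nonneg fun v _ => (hx0 v).le
  have hc : 0 < l - 1 := sub_pos.2 hl
  have hs0 : 0 < s := hs.lt_of_ne fun h0 => by
    rw [← h0, mul_zero] at hle'
    linarith [nonpos_of_mul_nonpos_right hle' hc]
  have ht0 : 0 < t := ht.lt_of_ne fun h0 => by
    rw [← h0, mul_zero] at hle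
    linarith [nonpos_of_mul_nonpos_right hle hc]
  have hprod : (l - 1) ^ 2 * (s * t) = (l - 1) * s * ((l - 1) * t) := by ring
  have hprod' : (#A * #Aᶜ : ℝ) * (s * t) = #A * t * (#Aᶜ * s) := by ring
  refine ⟨le_of_mul_le_mul_right ?_ (mul_pos hs0 ht0), fun hodd =>
    lt_of_mul_lt_mul_right ?_ (mul_pos hs0 ht0).le⟩ <;> rw [hprod, hprod']
  · gcongr
  · exact mul_lt_mul (hlt hodd) hle' (by positivity) (by positivity)

end MatchedBipartition

section NearBipartition

variable {V : Type*} [Fintype V] [DecidableEq V] {G : SimpleGraph V} [DecidableRel G.Adj]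
  {S T : Finset V}

/-- `S` and `T` are disjoint, each contains about half of the vertices, and every vertex of either
set is adjacent to almost all of the other one, with errors measured in hundredths of the number of
vertices. -/
structure IsNearBipartition (G : SimpleGraph V) [DecidableRel G.Adj] (S T : Finset V) : Prop where
  disjoint : Disjoint S T
  le_card_left : 48 * Fintype.card V ≤ 100 * #S
  card_left_le : 100 * #S ≤ 51 * Fintype.card V
  le_card_right : 48 * Fintype.card V ≤ 100 * #T
  card_right_le : 100 * #T ≤ 51 * Fintype.card V
  card_sdiff_left_le : ∀ t ∈ T, 100 * #(S \ G.neighborFinset t) ≤ Fintype.card V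
  card_sdiff_right_le : ∀ s ∈ S, 100 * #(T \ G.neighborFinset s) ≤ Fintype.card V

theorem IsNearBipartition.symm (h : IsNearBipartition G S T) : IsNearBipartition G T S :=
  ⟨h.disjoint.symm, h.le_card_right, h.card_right_le, h.le_card_left, h.card_left_le,
    h.card_sdiff_right_le, h.card_sdiff_left_le⟩

theorem LocallyC4Free.inducesMatching (hG : LocallyC4Free G) {k : ℕ} (hT : 3 * k + 1 < #T)
    (hS : ∀ u ∈ S, #(T \ G.neighborFinset u) ≤ k) : InducesMatching G S := by
  intro u a b hu ha hb hua hub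
  by_contra hab
  have := hG.card_le_of_path hab hua hub T
  linarith [hS u hu, hS a ha, hS b hb]

theorem IsNearBipartition.inducesMatching_left (h : IsNearBipartition G S T)
    (hG : LocallyC4Free G) (hn : 3 ≤ Fintype.card V) : InducesMatching G S := by
  refine hG.inducesMatching (T := T) (k := Fintype.card V / 100) ?_ fun u hu => ?_
  · have := h.le_card_right; omega
  · have := h.card_sdiff_right_le u hu; omega

theorem IsNearBipartition.degree_le (h : IsNearBipartition G S T) (v : V) :
    100 * G.degree v ≤
      100 * #(S ∩ G.neighborFinset v) + 100 * #(T ∩ G.neighborFinset v) + 4 * Fintype.card V := by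
  have hcover : G.neighborFinset v ⊆
      S ∩ G.neighborFinset v ∪ T ∩ G.neighborFinset v ∪ (S ∪ T)ᶜ := by
    intro u hu
    simp only [mem_union, mem_inter, mem_compl, hu, and_true]
    tauto
  have hdeg := (card_le_card hcover).trans
    ((card_union_le _ _).trans (Nat.add_le_add_right (card_union_le _ _) _))
  rw [G.card_neighborFinset_eq_degree, card_compl, card_union_of_disjoint h.disjoint] at hdeg
  have := h.le_card_left
  have := h.le_card_right
  omega

theorem IsNearBipartition.card_inter_right_le (h : IsNearBipartition G S T)
    (hG : LocallyC4Free G) {v : V} (hv : 1 < #(S ∩ G.neighborFinset v)) :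
    100 * #(T ∩ G.neighborFinset v) ≤ 2 * Fintype.card V + 100 := by
  obtain ⟨s, hs, t, ht, hst⟩ := one_lt_card.1 hv
  simp only [mem_inter, SimpleGraph.mem_neighborFinset] at hs ht
  have hpath := hG.card_le_of_path hst hs.2 ht.2 (T ∩ G.neighborFinset v)
  have hsub (w : V) : #((T ∩ G.neighborFinset v) \ G.neighborFinset w) ≤
      #(T \ G.neighborFinset w) := card_le_card (sdiff_subset_sdiff inter_subset_left le_rfl)
  rw [sdiff_eq_empty_iff_subset.2 inter_subset_right, card_empty] at hpath
  have := h.card_sdiff_right_le s hs.1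
  have := h.card_sdiff_right_le t ht.1
  have := hsub s
  have := hsub t
  omega

theorem IsNearBipartition.card_inter_right_le_one (h : IsNearBipartition G S T)
    (hG : LocallyC4Free G) (hn : 100 ≤ Fintype.card V) {v : V}
    (hdeg : 48 * Fintype.card V ≤ 100 * G.degree v) (hv : 1 < #(S ∩ G.neighborFinset v)) :
    #(T ∩ G.neighborFinset v) ≤ 1 := by
  by_contra! hT
  have := h.card_inter_right_le hG hv
  have := h.symm.card_inter_right_le hG hT
  have := h.degree_le v
  omega

theorem IsNearBipartition.card_sdiff_right_le_of_card_inter_left_le_one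
    (h : IsNearBipartition G S T) (hn : 100 ≤ Fintype.card V) {v : V}
    (hdeg : 48 * Fintype.card V ≤ 100 * G.degree v) (hv : #(S ∩ G.neighborFinset v) ≤ 1) :
    100 * #(T \ G.neighborFinset v) ≤ 8 * Fintype.card V := by
  have := h.degree_le v
  have := card_inter_add_card_sdiff T (G.neighborFinset v)
  have := h.card_right_le
  omega

theorem IsNearBipartition.exists_isMatchedBipartition (h : IsNearBipartition G S T)
    (hG : LocallyC4Free G) (hn : 100 ≤ Fintype.card V)
    (hdeg : ∀ v, 48 * Fintype.card V ≤ 100 * G.degree v) : ∃ A, IsMatchedBipartition G A := by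
  refine ⟨({v | #(S ∩ G.neighborFinset v) ≤ 1} : Finset V),
    hG.inducesMatching (T := T) (k := 8 * Fintype.card V / 100) ?_ fun v hv => ?_,
    hG.inducesMatching (T := S) (k := 8 * Fintype.card V / 100) ?_ fun v hv => ?_⟩
  · have := h.le_card_right; omega
  · have := h.card_sdiff_right_le_of_card_inter_left_le_one hn (hdeg v) (mem_filter.1 hv).2
    omega
  · have := h.le_card_left; omega
  · have hv' : 1 < #(S ∩ G.neighborFinset v) := by simpa using hv
    have := h.symm.card_sdiff_right_le_of_card_inter_left_le_one hn (hdeg v)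
      (h.card_inter_right_le_one hG hn (hdeg v) hv')
    omega

/-- Markov's inequality. -/
theorem exists_subset_mul_card_sdiff_le {ι : Type*} [DecidableEq ι] {s : Finset ι} {f : ι → ℕ}
    {n k : ℕ} (hn : 0 < n) (h : k ^ 2 * ∑ i ∈ s, f i ≤ n ^ 2) :
    ∃ t ⊆ s, k * #(s \ t) ≤ n ∧ ∀ i ∈ t, k * f i ≤ n := by
  refine ⟨{i ∈ s | k * f i ≤ n}, filter_subset _ _, ?_, fun i hi => (mem_filter.1 hi).2⟩
  rw [← filter_not]
  refine Nat.le_of_mul_le_mul_right ?_ hn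
  calc k * #{i ∈ s | ¬ k * f i ≤ n} * n = k * (#{i ∈ s | ¬ k * f i ≤ n} • n) := by
        rw [smul_eq_mul, mul_assoc]
    _ ≤ k * ∑ i ∈ s with ¬ k * f i ≤ n, k * f i := by
        gcongr
        exact card_nsmul_le_sum _ _ _ fun i hi => (not_le.1 (mem_filter.1 hi).2).le
    _ ≤ k * ∑ i ∈ s, k * f i := by gcongr; exact filter_subset _ _
    _ = k ^ 2 * ∑ i ∈ s, f i := by rw [← mul_sum]; ring
    _ ≤ n * n := h.trans_eq (sq n)

theorem sum_card_sdiff_neighborFinset_comm (G : SimpleGraph V) [DecidableRel G.Adj]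
    (A B : Finset V) :
    ∑ u ∈ A, #(B \ G.neighborFinset u) = ∑ v ∈ B, #(A \ G.neighborFinset v) := by
  simp only [card_eq_sum_ones]
  exact sum_comm' fun u v => by
    simp only [mem_sdiff, SimpleGraph.mem_neighborFinset, G.adj_comm]; tauto

theorem exists_isNearBipartition {A : Finset V} (hn : 0 < Fintype.card V)
    (hlo : 49 * Fintype.card V ≤ 100 * #A) (hhi : 100 * #A ≤ 51 * Fintype.card V)
    (hmiss : 100 ^ 2 * ∑ u ∈ A, #(Aᶜ \ G.neighborFinset u) ≤ Fintype.card V ^ 2) :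
    ∃ S T, IsNearBipartition G S T ∧ S ⊆ A ∧ 100 * #(A \ S) ≤ Fintype.card V := by
  have hmiss' := hmiss
  rw [sum_card_sdiff_neighborFinset_comm G A] at hmiss'
  obtain ⟨S, hSA, hS, hSmiss⟩ := exists_subset_mul_card_sdiff_le hn hmiss
  obtain ⟨T, hTA, hT, hTmiss⟩ := exists_subset_mul_card_sdiff_le hn hmiss'
  have hScard := card_sdiff_add_card_eq_card hSA
  have hTcard := card_sdiff_add_card_eq_card hTA
  have hAc := card_compl_add_card A
  refine ⟨S, T, ⟨disjoint_compl_right.mono hSA hTA, by omega, by omega, by omega, by omega,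
    fun t ht => le_trans ?_ (hTmiss t ht), fun s hs => le_trans ?_ (hSmiss s hs)⟩, hSA, hS⟩ <;>
  gcongr

end NearBipartition

section Walks

variable {V : Type*} [Fintype V] {G : SimpleGraph V} [DecidableRel G.Adj] {x : V → ℝ}
  {l : ℝ} {z : V}

theorem sq_le_sum_degree (hx : G.adjMatrix ℝ *ᵥ x = l • x) (hx1 : x ≤ 1) (hz : x z = 1) :
    l ^ 2 ≤ ∑ u ∈ G.neighborFinset z, G.degree u := by
  have hl : l = ∑ u ∈ G.neighborFinset z, x u := by rw [sum_neighborFinset_eq_mul hx, hz, mul_one]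
  calc l ^ 2 = ∑ u ∈ G.neighborFinset z, ∑ w ∈ G.neighborFinset u, x w := by
        simp_rw [sq, sum_neighborFinset_eq_mul hx, ← mul_sum, ← hl]
    _ ≤ ∑ u ∈ G.neighborFinset z, ∑ _w ∈ G.neighborFinset u, (1 : ℝ) := by
        gcongr with u _ w
        exact hx1 w
    _ = _ := by simp

theorem mul_le_degree (hx : G.adjMatrix ℝ *ᵥ x = l • x) (hx1 : x ≤ 1) (v : V) :
    l * x v ≤ G.degree v := by
  rw [← sum_neighborFinset_eq_mul hx, ← G.card_neighborFinset_eq_degree, ← nsmul_one]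
  exact sum_le_card_nsmul _ _ _ fun u _ => hx1 u

variable [DecidableEq V]

theorem LocallyC4Free.sum_card_offDiag_le (hG : LocallyC4Free G) (z : V) :
    ∑ u ∈ G.neighborFinset z, #(G.neighborFinset z ∩ G.neighborFinset u).offDiag ≤
      #(G.neighborFinset z).offDiag := by
  set S := G.neighborFinset z with hS
  calc ∑ u ∈ S, #(S ∩ G.neighborFinset u).offDiag
      = ∑ p ∈ S.offDiag, #{u ∈ S | G.Adj u p.1 ∧ G.Adj u p.2} := by
        simp only [card_eq_sum_ones]
        exact sum_comm' fun u p => by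
          simp only [mem_offDiag, mem_inter, mem_filter, SimpleGraph.mem_neighborFinset]; tauto
    _ ≤ ∑ p ∈ S.offDiag, 1 := sum_le_sum fun p hp => card_le_one.2 fun u hu w hw => by
        simp only [hS, mem_filter, mem_offDiag, SimpleGraph.mem_neighborFinset] at hp hu hw
        exact hG hp.1 hu.1 hp.2.1 hw.1 hu.2.1.symm hu.2.2 hw.2.2.symm hw.2.1 hp.2.2
    _ = #S.offDiag := (card_eq_sum_ones _).symm

/-- The Kővári–Sós–Turán bound for the number of edges in the neighbourhood of `z`. -/
theorem LocallyC4Free.sq_sum_card_inter_neighborFinset_le (hG : LocallyC4Free G) (z : V) :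
    (∑ u ∈ G.neighborFinset z, #(G.neighborFinset z ∩ G.neighborFinset u)) ^ 2 ≤
      2 * #(G.neighborFinset z) ^ 3 := by
  have hoff := hG.sum_card_offDiag_le z
  set S := G.neighborFinset z
  set P := ∑ u ∈ S, #(S ∩ G.neighborFinset u)
  have hP : P ≤ #S ^ 2 := by
    calc P ≤ ∑ _u ∈ S, #S := sum_le_sum fun u _ => card_le_card inter_subset_left
      _ = #S ^ 2 := by rw [sum_const, smul_eq_mul, sq]
  have hsq : ∑ u ∈ S, #(S ∩ G.neighborFinset u) ^ 2 ≤ 2 * #S ^ 2 := by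
    calc ∑ u ∈ S, #(S ∩ G.neighborFinset u) ^ 2
        = ∑ u ∈ S, #(S ∩ G.neighborFinset u).offDiag + P := by
          rw [← sum_add_distrib]
          refine sum_congr rfl fun u _ => ?_
          rw [offDiag_card, sq, Nat.sub_add_cancel (Nat.le_mul_self _)]
      _ ≤ #S.offDiag + #S ^ 2 := add_le_add hoff hP
      _ ≤ 2 * #S ^ 2 := by rw [offDiag_card, sq]; omega
  calc P ^ 2 ≤ #S * ∑ u ∈ S, #(S ∩ G.neighborFinset u) ^ 2 := sq_sum_le_card_mul_sum_sq
    _ ≤ #S * (2 * #S ^ 2) := by gcongr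
    _ = 2 * #S ^ 3 := by ring

theorem LocallyC4Free.mul_sum_card_inter_neighborFinset_le (hG : LocallyC4Free G)
    (hn : 2 * 10 ^ 8 ≤ Fintype.card V) (z : V) :
    100 ^ 2 * ∑ u ∈ G.neighborFinset z, #(G.neighborFinset z ∩ G.neighborFinset u) ≤
      Fintype.card V ^ 2 := by
  have hkst := hG.sq_sum_card_inter_neighborFinset_le z
  set n := Fintype.card V
  set P := ∑ u ∈ G.neighborFinset z, #(G.neighborFinset z ∩ G.neighborFinset u)
  refine (Nat.pow_le_pow_iff_left two_ne_zero).1 ?_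
  calc (100 ^ 2 * P) ^ 2 = 10 ^ 8 * P ^ 2 := by ring
    _ ≤ 10 ^ 8 * (2 * n ^ 3) := by
        gcongr
        exact hkst.trans (by gcongr; exact card_le_univ _)
    _ = 2 * 10 ^ 8 * n ^ 3 := by ring
    _ ≤ n * n ^ 3 := by gcongr
    _ = (n ^ 2) ^ 2 := by ring

theorem LocallyC4Free.exists_isNearBipartition (hG : LocallyC4Free G)
    (hn : 2 * 10 ^ 8 ≤ Fintype.card V) (hl : Fintype.card V ≤ 2 * l)
    (hx : G.adjMatrix ℝ *ᵥ x = l • x) (hx1 : x ≤ 1) (hz : x z = 1) :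
    ∃ S T, IsNearBipartition G S T ∧ S ⊆ G.neighborFinset z ∧
      100 * #(G.neighborFinset z \ S) ≤ Fintype.card V := by
  have hP := hG.mul_sum_card_inter_neighborFinset_le hn z
  have hident := sum_degree_add_sum_card_sdiff G (G.neighborFinset z)
  have hwalk := sq_le_sum_degree hx hx1 hz
  have hdeg : Fintype.card V ^ 2 ≤ 4 * ∑ u ∈ G.neighborFinset z, G.degree u := by
    have hsq : (Fintype.card V : ℝ) ^ 2 ≤ (2 * l) ^ 2 := by gcongr
    rify
    rify at hwalk
    linarith [mul_pow 2 l 2]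
  have hcard := card_add_card_compl (G.neighborFinset z)
  set A := G.neighborFinset z
  set n := Fintype.card V
  set P := ∑ u ∈ A, #(A ∩ G.neighborFinset u)
  set M := ∑ u ∈ A, #(Aᶜ \ G.neighborFinset u)
  have hbalance : 4 * (M : ℤ) + (#A - #Aᶜ) ^ 2 ≤ 4 * P := by
    zify at hident hdeg hcard
    rw [← hcard] at hdeg
    linarith
  have hdiff : |100 * (#A - #Aᶜ : ℤ)| ≤ 2 * n := by
    refine abs_le_of_sq_le_sq ?_ (by positivity)
    zify at hP
    linarith [Int.natCast_nonneg M]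
  rw [abs_le] at hdiff
  have hmiss : 100 ^ 2 * M ≤ n ^ 2 := by
    zify at hP ⊢
    linarith [sq_nonneg (#A - #Aᶜ : ℤ)]
  exact _root_.exists_isNearBipartition (by omega) (by omega) (by omega) hmiss

end Walks

section EigenvectorBounds

variable {V : Type*} [Fintype V] [DecidableEq V] {G : SimpleGraph V} [DecidableRel G.Adj]
  {x : V → ℝ} {l : ℝ} {z v : V} {S : Finset V}

/-- The vertices of `N(z)` carry total weight `l`. -/
theorem sub_card_sdiff_sub_one_le_mul [DecidableRel (rewire G v S).Adj] (hl : 0 < l)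
    (hx : G.adjMatrix ℝ *ᵥ x = l • x) (hx0 : 0 ≤ x) (hx1 : x ≤ 1) (hz : x z = 1)
    (h : maxEigenvalue ((rewire G v S).adjMatrix ℝ) ≤ l) :
    l - #(G.neighborFinset z \ S) - 1 ≤ l * x v := by
  have hcover : G.neighborFinset z ⊆ S.erase v ∪ insert v (G.neighborFinset z \ S) := by
    intro u hu
    simp only [mem_union, mem_erase, mem_insert, mem_sdiff, hu, true_and]
    tauto
  have hrest : ∑ u ∈ insert v (G.neighborFinset z \ S), x u ≤ #(G.neighborFinset z \ S) + 1 := by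
    calc ∑ u ∈ insert v (G.neighborFinset z \ S), x u
        ≤ #(insert v (G.neighborFinset z \ S)) • (1 : ℝ) := sum_le_card_nsmul _ _ _ fun u _ => hx1 u
      _ ≤ #(G.neighborFinset z \ S) + 1 := by
          rw [nsmul_one]; exact_mod_cast card_insert_le _ _
  have hsum : l ≤ ∑ u ∈ S.erase v, x u + ∑ u ∈ insert v (G.neighborFinset z \ S), x u := by
    calc l = ∑ u ∈ G.neighborFinset z, x u := by rw [sum_neighborFinset_eq_mul hx, hz, mul_one]
      _ ≤ ∑ u ∈ S.erase v ∪ insert v (G.neighborFinset z \ S), x u :=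
          sum_le_sum_of_subset_of_nonneg hcover fun u _ _ => hx0 u
      _ ≤ _ := by
          rw [← sum_union_inter]
          exact le_add_of_nonneg_right (sum_nonneg fun u _ => hx0 u)
  linarith [sum_erase_le_mul_of_maxEigenvalue_rewire_le hl hx (hx0 v) h]

end EigenvectorBounds

section Counting

theorem eight_mul_le_of_sub_one_sq_le {a b m n : ℕ} {l : ℝ} (h : (l - 1) ^ 2 ≤ a * b)
    (hm : 2 * (m : ℝ) ≤ l * n) : 8 * m ≤ 4 * n + 4 * (a * b) + n ^ 2 := by
  -- AM-GM: `(l - 1) * n ≤ (l - 1) ^ 2 + n ^ 2 / 4`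
  rify
  nlinarith [sq_nonneg (2 * (l - 1) - n)]

theorem eight_mul_lt_of_sub_one_sq_lt {a b m n : ℕ} {l : ℝ} (h : (l - 1) ^ 2 < a * b)
    (hm : 2 * (m : ℝ) ≤ l * n) : 8 * m < 4 * n + 4 * (a * b) + n ^ 2 := by
  rify
  nlinarith [sq_nonneg (2 * (l - 1) - n)]

theorem sq_add_two_mul_le_matchedEdges (n : ℕ) :
    n ^ 2 + 2 * n ≤ 4 * matchedEdges (n / 2) (n - n / 2) + 4 := by
  unfold matchedEdges
  obtain ⟨k, rfl | rfl⟩ := n.even_or_odd'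
  · rw [show 2 * k / 2 = k by omega, show 2 * k - k = k by omega]
    ring_nf; omega
  · rw [show (2 * k + 1) / 2 = k by omega, show 2 * k + 1 - k = k + 1 by omega]
    ring_nf; omega

theorem four_mul_matchedEdges_of_four_dvd {n : ℕ} (hn : 4 ∣ n) :
    4 * matchedEdges (n / 2) (n - n / 2) = n ^ 2 + 2 * n := by
  obtain ⟨k, rfl⟩ := hn
  unfold matchedEdges
  rw [show 4 * k / 2 = 2 * k by omega, show 4 * k - 2 * k = 2 * k by omega]
  ring_nf; omega

variable {a b m : ℕ}

theorem abs_sub_le_two_of_matchedEdges_le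
    (h : 8 * matchedEdges ((a + b) / 2) (a + b - (a + b) / 2) ≤
      4 * (a + b) + 4 * (a * b) + (a + b) ^ 2) : |(a - b : ℤ)| ≤ 2 := by
  have hbal := sq_add_two_mul_le_matchedEdges (a + b)
  have hsq : |(a - b : ℤ)| ^ 2 < 3 ^ 2 := by
    rw [sq_abs]
    zify at h hbal
    linarith
  exact Int.lt_add_one_iff.1 (lt_of_pow_lt_pow_left₀ 2 (by norm_num) hsq)

theorem abs_sub_le_one_of_matchedEdges_lt (ha : Odd a)
    (h : 8 * matchedEdges ((a + b) / 2) (a + b - (a + b) / 2) <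
      4 * (a + b) + 4 * (a * b) + (a + b) ^ 2) : |(a - b : ℤ)| ≤ 1 := by
  by_contra! hab
  have hle := abs_sub_le_two_of_matchedEdges_le h.le
  have hdvd : 4 ∣ a + b := by grind
  have hsq : (a - b : ℤ) ^ 2 = 2 ^ 2 := by rw [← sq_abs, le_antisymm hle hab]
  have hbal := four_mul_matchedEdges_of_four_dvd hdvd
  zify at h hbal
  linarith

theorem le_matchedEdges (hab : |(a - b : ℤ)| ≤ 2) (hab' : Odd a → |(a - b : ℤ)| ≤ 1)
    (hm : 8 * m ≤ 4 * (a + b) + 4 * (a * b) + (a + b) ^ 2)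
    (hm' : Odd a → 8 * m < 4 * (a + b) + 4 * (a * b) + (a + b) ^ 2) :
    m ≤ matchedEdges a b := by
  have hcases : b = a ∨ b = a + 1 ∨ b = a + 2 ∨ a = b + 1 ∨ a = b + 2 := by
    rw [abs_le] at hab
    omega
  unfold matchedEdges
  simp only [Nat.odd_iff, abs_le] at hab' hm'
  rcases hcases with rfl | rfl | rfl | rfl | rfl
  all_goals
    ring_nf at *
    omega

end Counting

section Extremal

/-- `G` is `W₅`-free, in the form `LocallyC4Free`, and has the largest spectral radius among all
`W₅`-free graphs on `V`. -/
def IsSpectrallyExtremal {V : Type*} [Fintype V] [DecidableEq V] (G : SimpleGraph V)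
    [DecidableRel G.Adj] : Prop :=
  LocallyC4Free G ∧ ∀ (H : SimpleGraph V) [DecidableRel H.Adj], LocallyC4Free H →
    maxEigenvalue (H.adjMatrix ℝ) ≤ maxEigenvalue (G.adjMatrix ℝ)

variable {V : Type*} [Fintype V] [DecidableEq V] {G H : SimpleGraph V} [DecidableRel G.Adj]

theorem IsSpectrallyExtremal.two_mul_card_edgeFinset_le [Nonempty V] [DecidableRel H.Adj]
    (hG : IsSpectrallyExtremal G) (hH : LocallyC4Free H) :
    2 * (#H.edgeFinset : ℝ) ≤ maxEigenvalue (G.adjMatrix ℝ) * Fintype.card V :=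
  two_mul_card_edgeFinset_le_maxEigenvalue_mul_card.trans <| by gcongr; exact hG.2 H hH

theorem IsSpectrallyExtremal.two_mul_matchedEdges_le [Nonempty V] (hG : IsSpectrallyExtremal G) :
    2 * (matchedEdges (Fintype.card V / 2) (Fintype.card V - Fintype.card V / 2) : ℝ) ≤
      maxEigenvalue (G.adjMatrix ℝ) * Fintype.card V := by
  classical
  obtain ⟨A, -, hA⟩ := exists_subset_card_eq (Nat.div_le_self #(univ : Finset V) 2)
  obtain ⟨H, hH⟩ := exists_maximal_isMatchedBipartition A
  have h := hG.two_mul_card_edgeFinset_le hH.1.locallyC4Free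
  rwa [card_edgeFinset_of_maximal hH, card_compl, hA, card_univ] at h

theorem IsSpectrallyExtremal.card_le_two_mul_maxEigenvalue (hG : IsSpectrallyExtremal G)
    (hn : 2 ≤ Fintype.card V) : Fintype.card V ≤ 2 * maxEigenvalue (G.adjMatrix ℝ) := by
  have : Nonempty V := Fintype.card_pos_iff.1 (by omega)
  have h := hG.two_mul_matchedEdges_le
  have hbal : Fintype.card V ^ 2 ≤
      4 * matchedEdges (Fintype.card V / 2) (Fintype.card V - Fintype.card V / 2) := by
    have := sq_add_two_mul_le_matchedEdges (Fintype.card V)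
    omega
  rify at hbal
  refine le_of_mul_le_mul_right ?_ (by positivity : (0 : ℝ) < Fintype.card V)
  linarith

variable {x : V → ℝ} {z : V}

theorem IsSpectrallyExtremal.exists_isNearBipartition_forall_le (hG : IsSpectrallyExtremal G)
    (hn : 2 * 10 ^ 8 ≤ Fintype.card V)
    (hx : G.adjMatrix ℝ *ᵥ x = maxEigenvalue (G.adjMatrix ℝ) • x) (hx0 : 0 ≤ x) (hx1 : x ≤ 1)
    (hz : x z = 1) :
    (∃ S T, IsNearBipartition G S T) ∧
      ∀ v, 48 * (Fintype.card V : ℝ) ≤ 100 * (maxEigenvalue (G.adjMatrix ℝ) * x v) := by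
  classical
  have hl := hG.card_le_two_mul_maxEigenvalue (by omega)
  obtain ⟨S, T, hST, -, hS⟩ := hG.1.exists_isNearBipartition hn hl hx hx1 hz
  refine ⟨⟨S, T, hST⟩, fun v => ?_⟩
  have hfree := hG.1.rewire v (hST.inducesMatching_left hG.1 (by omega))
  rify at hn hS
  linarith [sub_card_sdiff_sub_one_le_mul (by linarith) hx hx0 hx1 hz (hG.2 _ hfree)]

theorem IsSpectrallyExtremal.exists_isMatchedBipartition_and_pos (hG : IsSpectrallyExtremal G)
    (hn : 2 * 10 ^ 8 ≤ Fintype.card V) :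
    (∃ A, IsMatchedBipartition G A) ∧ ∃ x : V → ℝ, (∀ v, 0 < x v) ∧
      G.adjMatrix ℝ *ᵥ x = maxEigenvalue (G.adjMatrix ℝ) • x := by
  have : Nonempty V := Fintype.card_pos_iff.1 (by omega)
  obtain ⟨x, z, hx0, hx1, hz, hx⟩ :=
    exists_perronVector (G.isHermitian_adjMatrix ℝ) adjMatrix_apply_nonneg
  obtain ⟨⟨S, T, hST⟩, hlow⟩ := hG.exists_isNearBipartition_forall_le hn hx hx0 hx1 hz
  have hl := hG.card_le_two_mul_maxEigenvalue (by omega)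
  have hdeg (v : V) : 48 * Fintype.card V ≤ 100 * G.degree v := by
    rify
    linarith [hlow v, mul_le_degree hx hx1 v]
  have hcard : (0 : ℝ) < Fintype.card V := by positivity
  exact ⟨hST.exists_isMatchedBipartition hG.1 (by omega) hdeg, x,
    fun v => pos_of_mul_pos_right (by linarith [hlow v]) (by linarith), hx⟩

theorem IsSpectrallyExtremal.maximal_isMatchedBipartition {A : Finset V}
    (hG : IsSpectrallyExtremal G) (hA : IsMatchedBipartition G A) (hx0 : ∀ v, 0 < x v)
    (hx : G.adjMatrix ℝ *ᵥ x = maxEigenvalue (G.adjMatrix ℝ) • x) :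
    Maximal (fun H => IsMatchedBipartition H A) G := by
  classical
  refine ⟨hA, fun H hH hGH => ?_⟩
  by_contra hHG
  exact (hG.2 H hH.locallyC4Free).not_gt
    (lt_maxEigenvalue_adjMatrix_of_lt (lt_of_le_not_ge hGH hHG) hx0 hx)

theorem IsSpectrallyExtremal.card_edgeFinset_le [DecidableRel H.Adj] (hG : IsSpectrallyExtremal G)
    (hn : 2 * 10 ^ 8 ≤ Fintype.card V) (hH : LocallyC4Free H) :
    #H.edgeFinset ≤ #G.edgeFinset := by
  have : Nonempty V := Fintype.card_pos_iff.1 (by omega)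
  obtain ⟨⟨A, hA⟩, x, hx0, hx⟩ := hG.exists_isMatchedBipartition_and_pos hn
  have hl : 1 < maxEigenvalue (G.adjMatrix ℝ) := by
    have := hG.card_le_two_mul_maxEigenvalue (by omega)
    rify at hn
    linarith
  obtain ⟨hle, hlt⟩ := hA.sub_one_sq_le hx hx0 hl
  have hbal := hG.two_mul_matchedEdges_le
  have hedges := hG.two_mul_card_edgeFinset_le hH
  rw [card_edgeFinset_of_maximal (hG.maximal_isMatchedBipartition hA hx0 hx)]
  rw [← card_add_card_compl A] at hbal hedges
  exact le_matchedEdges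
    (abs_sub_le_two_of_matchedEdges_le (eight_mul_le_of_sub_one_sq_le hle hbal))
    (fun hodd => abs_sub_le_one_of_matchedEdges_lt hodd
      (eight_mul_lt_of_sub_one_sq_lt (hlt hodd) hbal))
    (eight_mul_le_of_sub_one_sq_le hle hedges)
    fun hodd => eight_mul_lt_of_sub_one_sq_lt (hlt hodd) hedges

end Extremal

section Wheel

variable {n : ℕ} {G : SimpleGraph (Fin n)}

theorem lam1_eq_maxEigenvalue (G : SimpleGraph (Fin n)) [DecidableRel G.Adj] :
    lam1 G = maxEigenvalue (G.adjMatrix ℝ) := by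
  unfold lam1 maxEigenvalue
  congr 1
  ext μ
  rw [Set.mem_ofPred_eq, Module.End.hasEigenvalue_iff_mem_spectrum, Matrix.spectrum_toLin']
  congr!

theorem edgeCount_eq_card_edgeFinset {V : Type*} [Fintype V] (G : SimpleGraph V)
    [Fintype G.edgeSet] : edgeCount G = #G.edgeFinset := by
  unfold edgeCount
  congr!

theorem IsSpexWheel.isSpectrallyExtremal [DecidableRel G.Adj] (hG : IsSpexWheel 5 G) :
    IsSpectrallyExtremal G := by
  refine ⟨wheelFree_five_iff.1 hG.1, fun H _ hH => ?_⟩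
  rw [← lam1_eq_maxEigenvalue, ← lam1_eq_maxEigenvalue]
  exact hG.2 H (wheelFree_five_iff.2 hH)

end Wheel

/-- For sufficiently large `n`, `SPEX(n, W₅) ⊆ EX(n, W₅)`. -/
theorem spex_subset_ex_W5 :
    ∃ N : ℕ, ∀ n : ℕ, N ≤ n → ∀ G : SimpleGraph (Fin n),
      IsSpexWheel 5 G → IsExWheel 5 G := by
  classical
  refine ⟨2 * 10 ^ 8, fun n hn G hG => ⟨hG.1, fun H hH => ?_⟩⟩
  have hcard : 2 * 10 ^ 8 ≤ Fintype.card (Fin n) := by rwa [Fintype.card_fin]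
  rw [edgeCount_eq_card_edgeFinset, edgeCount_eq_card_edgeFinset]
  exact hG.isSpectrallyExtremal.card_edgeFinset_le hcard (wheelFree_five_iff.1 hH)
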